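/- In the exterior algebra of V = ℂ⁸, the Cartan generators satisfy hᵢ ∧ hⱼ = 0 for all i ≠ j in {1,…,7}, and hᵢ ∧ hᵢ = 2·ω for every i, where ω = e₁∧e₂∧⋯∧e₈ is the standard volume element. Equivalently, hᵢ ∧ hⱼ = 2δᵢⱼ·ω. -/

import Mathlib

open ExteriorAlgebra

/-- `V = ℂ⁸`. -/
abbrev V8 : Type := Fin 8 → ℂ

/-- The standard basis vector `eₐ` of `ℂ⁸`, for `a ∈ {1,…,8}`. -/
noncomputable def stdVec (a : ℕ) : V8 :=
  Pi.single (⟨(a - 1) % 8, Nat.mod_lt _ (by norm_num)⟩ : Fin 8) 1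

/-- For a finite set `A = {a₁ < ⋯ < a_k} ⊆ {1,…,8}`, the wedge
`e_A = e_{a₁} ∧ ⋯ ∧ e_{a_k}` in the exterior algebra `⋀V`. -/
noncomputable def eWedge (A : Finset ℕ) : ExteriorAlgebra ℂ V8 :=
  ((A.sort (· ≤ ·)).map fun a => ExteriorAlgebra.ι ℂ (stdVec a)).prod

/-- The volume element `ω = e₁ ∧ e₂ ∧ ⋯ ∧ e₈`. -/
noncomputable def vol : ExteriorAlgebra ℂ V8 := eWedge (Finset.Icc 1 8)

/-- The fourtuples `K₁,…,K₇` of the Cartan subspace of `⋀⁴ℂ⁸`. -/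
def cartanK : ℕ → Finset ℕ
  | 1 => {1, 2, 3, 4}
  | 2 => {1, 3, 5, 7}
  | 3 => {1, 2, 5, 6}
  | 4 => {1, 3, 6, 8}
  | 5 => {1, 4, 5, 8}
  | 6 => {1, 4, 6, 7}
  | 7 => {1, 2, 7, 8}
  | _ => ∅

/-- The complementary fourtuples `L₁,…,L₇`. -/
def cartanL : ℕ → Finset ℕ
  | 1 => {5, 6, 7, 8}
  | 2 => {2, 4, 6, 8}
  | 3 => {3, 4, 7, 8}
  | 4 => {2, 4, 5, 7}
  | 5 => {2, 3, 6, 7}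
  | 6 => {2, 3, 5, 8}
  | 7 => {3, 4, 5, 6}
  | _ => ∅

/-- The Cartan generators `hᵢ = e_{Kᵢ} + e_{Lᵢ} ∈ ⋀⁴V`. -/
noncomputable def cartanH (i : ℕ) : ExteriorAlgebra ℂ V8 :=
  eWedge (cartanK i) + eWedge (cartanL i)

/-!
Two sorted wedges `e_A` and `e_B` multiply to zero when `A` and `B` meet, and to `± e_{A ∪ B}`
otherwise, the sign being the parity of the number of inversions between `A` and `B`. The fourteen
blocks `Kᵢ`, `Lᵢ` form the Steiner system `S(3,4,8)`, in which only complementary blocks are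
disjoint, so the expansion of `hᵢ ∧ hⱼ` is zero for `i ≠ j`, and for `i = j` it reduces to
`e_{Kᵢ} ∧ e_{Lᵢ} + e_{Lᵢ} ∧ e_{Kᵢ}`. Both signs are positive because each `(Kᵢ, Lᵢ)` is an even
shuffle of `(1, …, 8)`, and so is `(Lᵢ, Kᵢ)`.
-/

section SortedWedge

open Set.powersetCard

variable {α : Type*} [LinearOrder α]

/-- The sign of the permutation sorting the elements of `s`, in increasing order, followed by those
of `t`. It is encoded as a product over `s × t` with a factor `-1` for each inversion. -/
def shuffleSign (s t : Finset α) : ℤˣ :=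
  ∏ a ∈ s, ∏ b ∈ t, if a < b then 1 else -1

section PermOfDisjoint

variable {m n : ℕ} {s : Set.powersetCard α m} {t : Set.powersetCard α n}
  (h : Disjoint s.val t.val)

lemma ofFinEmbEquiv_symm_permOfDisjoint (i : Fin (m + n)) :
    ofFinEmbEquiv.symm (disjUnion h) (permOfDisjoint h i) =
      Fin.append (ofFinEmbEquiv.symm s) (ofFinEmbEquiv.symm t) i := by
  refine (congrArg Subtype.val ((orderIsoOfFin (disjUnion h)).apply_symm_apply _)).trans ?_
  cases i using Fin.addCases
  · rw [finSumFinEquiv_symm_apply_castAdd, Fin.append_left]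
    rfl
  · rw [finSumFinEquiv_symm_apply_natAdd, Fin.append_right]
    rfl

lemma permOfDisjoint_lt_permOfDisjoint_iff (i j : Fin (m + n)) :
    permOfDisjoint h i < permOfDisjoint h j ↔
      Fin.append (ofFinEmbEquiv.symm s) (ofFinEmbEquiv.symm t) i <
        Fin.append (ofFinEmbEquiv.symm s) (ofFinEmbEquiv.symm t) j := by
  rw [← ofFinEmbEquiv_symm_permOfDisjoint h, ← ofFinEmbEquiv_symm_permOfDisjoint h,
    OrderEmbedding.lt_iff_lt]

lemma sign_permOfDisjoint : (permOfDisjoint h).sign = shuffleSign s.val t.val := by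
  have prod_eq_prod_fin {k : ℕ} (u : Set.powersetCard α k) (f : α → ℤˣ) :
      ∏ a ∈ u.val, f a = ∏ i, f (ofFinEmbEquiv.symm u i) := by
    rw [← Finset.map_orderEmbOfFin_univ u.val u.prop, Finset.prod_map]
    rfl
  have castAdd_lt_natAdd (i : Fin m) (j : Fin n) : Fin.castAdd n i < Fin.natAdd m j :=
    Fin.lt_def.mpr (by simp; omega)
  -- Two positions on the same side of the cut are never inverted, so they contribute `1`.
  have same_side (p : Prop) [Decidable p] : (if p then if p then 1 else -1 else 1 : ℤˣ) = 1 := by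
    split_ifs <;> rfl
  simp only [Equiv.Perm.sign_eq_prod_prod_Ioi, ← Finset.filter_lt_eq_Ioi, Finset.prod_filter,
    permOfDisjoint_lt_permOfDisjoint_iff, Fin.prod_univ_add, Fin.append_left, Fin.append_right]
  simp [shuffleSign, prod_eq_prod_fin, castAdd_lt_natAdd, (castAdd_lt_natAdd _ _).not_gt,
    (Fin.strictMono_castAdd n).lt_iff_lt, same_side]

end PermOfDisjoint

variable (R : Type*) [CommRing R] {M : Type*} [AddCommGroup M] [Module R M] (v : α → M)

/-- The wedge `v a₁ ∧ ⋯ ∧ v aₖ` of a family `v` of vectors along a finite set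
`s = {a₁ < ⋯ < aₖ}` of indices. Unlike `ExteriorAlgebra.ιMulti_family`, it does not carry the
cardinality of `s` in its type. -/
noncomputable def sortedWedge (s : Finset α) : ExteriorAlgebra R M :=
  (s.sort.map fun a ↦ ι R (v a)).prod

lemma ιMulti_family_eq_sortedWedge {n : ℕ} (s : Set.powersetCard α n) :
    ιMulti_family R n v s = sortedWedge R v s.val := by
  rw [sortedWedge, ← Finset.listMap_orderEmbOfFin_finRange s.val s.prop, List.map_map,
    ← List.ofFn_eq_map, ιMulti_family, ιMulti_apply]
  rfl

variable {s t : Finset α}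

lemma sortedWedge_mul_of_not_disjoint (h : ¬Disjoint s t) :
    sortedWedge R v s * sortedWedge R v t = 0 := by
  have mul_eq_zero :=
    ιMulti_family_mul_of_not_disjoint R v (ofCard (s := s) rfl) (ofCard (s := t) rfl) h
  rwa [ιMulti_family_eq_sortedWedge, ιMulti_family_eq_sortedWedge] at mul_eq_zero

lemma sortedWedge_mul_of_disjoint (h : Disjoint s t) :
    sortedWedge R v s * sortedWedge R v t = shuffleSign s t • sortedWedge R v (s ∪ t) := by
  have h' : Disjoint (ofCard (s := s) rfl).val (ofCard (s := t) rfl).val := h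
  have mul_eq_sign_smul := ιMulti_family_mul_of_disjoint R v _ _ h'
  rwa [ιMulti_family_eq_sortedWedge, ιMulti_family_eq_sortedWedge, ιMulti_family_eq_sortedWedge,
    sign_permOfDisjoint, coe_disjUnion, Finset.disjUnion_eq_union] at mul_eq_sign_smul

end SortedWedge

lemma disjoint_cartanK_cartanL : ∀ i ∈ Finset.Icc 1 7, Disjoint (cartanK i) (cartanL i) := by
  decide

lemma cartanK_union_cartanL : ∀ i ∈ Finset.Icc 1 7, cartanK i ∪ cartanL i = Finset.Icc 1 8 := by
  decide

lemma shuffleSign_cartanK_cartanL :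
    ∀ i ∈ Finset.Icc 1 7, shuffleSign (cartanK i) (cartanL i) = 1 := by
  decide

lemma shuffleSign_cartanL_cartanK :
    ∀ i ∈ Finset.Icc 1 7, shuffleSign (cartanL i) (cartanK i) = 1 := by
  decide

lemma not_disjoint_cartanK_cartanK :
    ∀ i ∈ Finset.Icc 1 7, ∀ j ∈ Finset.Icc 1 7, ¬Disjoint (cartanK i) (cartanK j) := by
  decide

lemma not_disjoint_cartanL_cartanL :
    ∀ i ∈ Finset.Icc 1 7, ∀ j ∈ Finset.Icc 1 7, ¬Disjoint (cartanL i) (cartanL j) := by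
  decide

lemma not_disjoint_cartanK_cartanL :
    ∀ i ∈ Finset.Icc 1 7, ∀ j ∈ Finset.Icc 1 7, i ≠ j → ¬Disjoint (cartanK i) (cartanL j) := by
  decide

theorem cartan_generators_wedge_general (R : Type*) [CommRing R] {M : Type*} [AddCommGroup M]
    [Module R M] (v : ℕ → M) :
    ∀ i ∈ Finset.Icc 1 7, ∀ j ∈ Finset.Icc 1 7,
      (sortedWedge R v (cartanK i) + sortedWedge R v (cartanL i)) *
          (sortedWedge R v (cartanK j) + sortedWedge R v (cartanL j)) =
        if i = j then (2 : R) • sortedWedge R v (Finset.Icc 1 8) else 0 := by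
  intro i hi j hj
  have hKK := sortedWedge_mul_of_not_disjoint R v (not_disjoint_cartanK_cartanK i hi j hj)
  have hLL := sortedWedge_mul_of_not_disjoint R v (not_disjoint_cartanL_cartanL i hi j hj)
  rw [add_mul, mul_add, mul_add, hKK, hLL, zero_add, add_zero]
  split_ifs with hij
  · subst hij
    have hdisj := disjoint_cartanK_cartanL i hi
    rw [sortedWedge_mul_of_disjoint R v hdisj, sortedWedge_mul_of_disjoint R v hdisj.symm,
      shuffleSign_cartanK_cartanL i hi, shuffleSign_cartanL_cartanK i hi,
      Finset.union_comm (cartanL i), cartanK_union_cartanL i hi, one_smul, two_smul]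
  · have hKL := not_disjoint_cartanK_cartanL i hi j hj hij
    have hLK : ¬Disjoint (cartanL i) (cartanK j) := fun h ↦
      not_disjoint_cartanK_cartanL j hj i hi (Ne.symm hij) h.symm
    rw [sortedWedge_mul_of_not_disjoint R v hKL, sortedWedge_mul_of_not_disjoint R v hLK, add_zero]

/-- The Cartan generators satisfy `hᵢ ∧ hⱼ = 2 δᵢⱼ ω`: the wedge of two distinct
generators vanishes, and the wedge of a generator with itself is twice the volume
element. -/
theorem cartan_generators_wedge :
    ∀ i ∈ Finset.Icc 1 7, ∀ j ∈ Finset.Icc 1 7,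
      cartanH i * cartanH j = if i = j then (2 : ℂ) • vol else 0 :=
  cartan_generators_wedge_general ℂ stdVec
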